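/- With the notation of the Poisson problem −ΔU = ∂_k∂_i∂_j h for h ∈ L¹(ℝ^d, (1+|x|)^{-(d+1)} dx), the solution U = (∂_k ∂_i∂_j G_d) * h (defined via the cutoff decomposition) satisfies the heat-semigroup estimate |e^{τΔ}U(x)| ≤ C ∫ (√τ + |x−y|)^{-(d+1)} |h(y)| dy for all τ > 0, and consequently e^{τΔ}U → 0 in L¹(ℝ^d, (1+|x|)^{-(d+1)} dx) as τ → ∞. -/

import Mathlib

open MeasureTheory Real Filter

noncomputable section

variable {d : ℕ}

/-- Partial derivative in the `i`-th coordinate direction on `ℝ^d`. -/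
def pd (i : Fin d) (f : EuclideanSpace ℝ (Fin d) → ℝ) :
    EuclideanSpace ℝ (Fin d) → ℝ :=
  fun x => fderiv ℝ f x (EuclideanSpace.single i 1)

/-- The heat kernel on `ℝ^d`. -/
def heatW (d : ℕ) (t : ℝ) (x : EuclideanSpace ℝ (Fin d)) : ℝ :=
  (4 * Real.pi * t) ^ (-(d : ℝ) / 2) * Real.exp (-‖x‖ ^ (2 : ℕ) / (4 * t))

/-- The kernel `e^{τΔ}∂ₖ∂ᵢ∂ⱼG_d = ∫_τ^∞ ∂ₖ∂ᵢ∂ⱼ W_t dt`. -/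
def heatKer (d : ℕ) (i j k : Fin d) (τ : ℝ) (x : EuclideanSpace ℝ (Fin d)) : ℝ :=
  ∫ t in Set.Ioi τ, pd k (pd i (pd j (heatW d t))) x

/-!
The third derivatives of the heat kernel `W_t` are `W_t` times a cubic polynomial, and a Gaussian
beats every power of `1 + |x| / √t`; hence `|∂ₖ∂ᵢ∂ⱼ W_t(x)| ≲ (√t)⁻¹ (√t + |x|)^(-(d + 2))`.
The right-hand side is, up to a constant, the `t`-derivative of `(√t + |x|)^(-(d + 1))`, so
integrating over `t > τ` bounds the kernel of `e^{τΔ}∂ₖ∂ᵢ∂ⱼG_d` by `(√τ + |x|)^(-(d + 1))`.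

For the limit, with `p = d + 1`, it suffices that
`∬ (√τ + |x - y|)^(-p) (1 + |x|)^(-p) |h y| dy dx → 0`. The integrand tends to `0` pointwise.
As `max |x - y| |x| ≥ |y| / 2`, for `τ ≥ 1` it is dominated by
`2^p ((1 + |x - y|)^(-p) + (1 + |x|)^(-p)) (1 + |y|)^(-p) |h y|`, which is integrable over pairs
`(x, y)` because `p > d`.
-/

section WeightedConvolution

lemma rpow_neg_le_mul_rpow_neg {p a u v : ℝ} (hp : 0 ≤ p) (ha : 0 ≤ a) (hu : 0 < u)
    (huv : u ≤ a * v) : v ^ (-p) ≤ a ^ p * u ^ (-p) := by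
  have hav : 0 < a * v := hu.trans_le huv
  have hv : 0 < v := pos_of_mul_pos_right hav ha
  have ha' : 0 < a := pos_of_mul_pos_left hav hv.le
  calc v ^ (-p) = a ^ p * (a * v) ^ (-p) := by
        rw [mul_rpow ha hv.le, ← mul_assoc, ← rpow_add ha', add_neg_cancel, rpow_zero, one_mul]
    _ ≤ a ^ p * u ^ (-p) :=
        mul_le_mul_of_nonneg_left (rpow_le_rpow_of_nonpos hu huv (neg_nonpos.2 hp)) (by positivity)

lemma rpow_neg_mul_rpow_neg_le {p a b c : ℝ} (hp : 0 ≤ p) (ha : 0 ≤ a) (hb : 0 ≤ b)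
    (hc : 0 ≤ c) (habc : c ≤ a + b) :
    (1 + a) ^ (-p) * (1 + b) ^ (-p) ≤
      2 ^ p * (((1 + a) ^ (-p) + (1 + b) ^ (-p)) * (1 + c) ^ (-p)) := by
  wlog hab : a ≤ b generalizing a b
  · simpa only [mul_comm ((1 + b) ^ (-p)), add_comm ((1 + b) ^ (-p))] using
      this hb ha (by linarith) (le_of_not_ge hab)
  have hbc : (1 + b) ^ (-p) ≤ 2 ^ p * (1 + c) ^ (-p) :=
    rpow_neg_le_mul_rpow_neg hp zero_le_two (by positivity) (by linarith)
  calc (1 + a) ^ (-p) * (1 + b) ^ (-p)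
      ≤ (1 + a) ^ (-p) * (2 ^ p * (1 + c) ^ (-p)) := by gcongr
    _ = 2 ^ p * ((1 + a) ^ (-p) * (1 + c) ^ (-p)) := by ring
    _ ≤ 2 ^ p * (((1 + a) ^ (-p) + (1 + b) ^ (-p)) * (1 + c) ^ (-p)) := by
        gcongr
        exact le_add_of_nonneg_right (by positivity)

lemma tendsto_add_const_rpow_neg_atTop {p : ℝ} (hp : 0 < p) (r : ℝ) :
    Tendsto (fun σ : ℝ => (σ + r) ^ (-p)) atTop (nhds 0) :=
  (tendsto_rpow_neg_atTop hp).comp (tendsto_atTop_add_const_right _ r tendsto_id)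

variable {E F : Type*} [NormedAddCommGroup E] [NormedAddCommGroup F]

lemma one_add_norm_le_mul_add_norm_sub {σ : ℝ} (hσ : 0 < σ) (x y : E) :
    1 + ‖y‖ ≤ (1 + (1 + ‖x‖) / σ) * (σ + ‖x - y‖) := by
  have hy : ‖y‖ ≤ ‖x‖ + ‖x - y‖ := by simpa using norm_sub_le x (x - y)
  calc 1 + ‖y‖ ≤ 1 + ‖x‖ + ‖x - y‖ := by linarith
    _ ≤ 1 + ‖x‖ + ‖x - y‖ + (σ + (1 + ‖x‖) / σ * ‖x - y‖) :=
        le_add_of_nonneg_right (by positivity)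
    _ = (1 + (1 + ‖x‖) / σ) * (σ + ‖x - y‖) := by field_simp; ring

lemma norm_prod_rpow_neg_le {p : ℝ} (hp : 0 ≤ p) {σ : ℝ} (hσ : 1 ≤ σ) (h : E → F) (z : E × E) :
    ‖(σ + ‖z.1 - z.2‖) ^ (-p) * ‖h z.2‖ * (1 + ‖z.1‖) ^ (-p)‖ ≤
      (1 + ‖z.1 - z.2‖) ^ (-p) * ‖h z.2‖ * (1 + ‖z.1‖) ^ (-p) := by
  have hanti : (σ + ‖z.1 - z.2‖) ^ (-p) ≤ (1 + ‖z.1 - z.2‖) ^ (-p) :=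
    rpow_le_rpow_of_nonpos (by positivity) (by linarith) (neg_nonpos.2 hp)
  rw [norm_of_nonneg (by positivity)]
  gcongr

lemma norm_kernel_smul_le [NormedSpace ℝ F] {K : E → ℝ} {C σ p : ℝ}
    (hK : ∀ x, |K x| ≤ C * (σ + ‖x‖) ^ (-p)) (h : E → F) (x y : E) :
    ‖K (x - y) • h y‖ ≤ C * ((σ + ‖x - y‖) ^ (-p) * ‖h y‖) := by
  rw [norm_smul, ← mul_assoc]
  exact mul_le_mul_of_nonneg_right (hK (x - y)) (norm_nonneg _)

variable [MeasurableSpace E] [BorelSpace E] {μ : Measure E} {p : ℝ} {h : E → F}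

lemma integrable_add_norm_sub_rpow_neg_mul_norm (hp : 0 ≤ p) (hmeas : AEStronglyMeasurable h μ)
    (hint : Integrable (fun y => ‖h y‖ * (1 + ‖y‖) ^ (-p)) μ) {σ : ℝ} (hσ : 0 < σ) (x : E) :
    Integrable (fun y => (σ + ‖x - y‖) ^ (-p) * ‖h y‖) μ := by
  have hweight : Measurable fun y : E => (σ + ‖x - y‖) ^ (-p) := by fun_prop
  refine (hint.const_mul ((1 + (1 + ‖x‖) / σ) ^ p)).mono'
    (hweight.aestronglyMeasurable.mul hmeas.norm) (.of_forall fun y => ?_)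
  rw [norm_of_nonneg (by positivity), mul_comm ‖h y‖, ← mul_assoc]
  gcongr
  exact rpow_neg_le_mul_rpow_neg hp (by positivity) (by positivity)
    (one_add_norm_le_mul_add_norm_sub hσ x y)

section Kernel

variable [NormedSpace ℝ F] {K : E → ℝ} {C σ : ℝ}

lemma integrable_kernel_smul (hp : 0 ≤ p) (hmeas : AEStronglyMeasurable h μ)
    (hint : Integrable (fun y => ‖h y‖ * (1 + ‖y‖) ^ (-p)) μ) (hσ : 0 < σ)
    (hK_meas : Measurable K) (hK : ∀ x, |K x| ≤ C * (σ + ‖x‖) ^ (-p)) (x : E) :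
    Integrable (fun y => K (x - y) • h y) μ :=
  ((integrable_add_norm_sub_rpow_neg_mul_norm hp hmeas hint hσ x).const_mul C).mono'
    ((hK_meas.comp (measurable_const_sub x)).aestronglyMeasurable.smul hmeas)
    (.of_forall (norm_kernel_smul_le hK h x))

lemma norm_integral_kernel_smul_le (hp : 0 ≤ p) (hmeas : AEStronglyMeasurable h μ)
    (hint : Integrable (fun y => ‖h y‖ * (1 + ‖y‖) ^ (-p)) μ) (hσ : 0 < σ)
    (hK : ∀ x, |K x| ≤ C * (σ + ‖x‖) ^ (-p)) (x : E) :
    ‖∫ y, K (x - y) • h y ∂μ‖ ≤ C * ∫ y, (σ + ‖x - y‖) ^ (-p) * ‖h y‖ ∂μ := by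
  rw [← integral_const_mul]
  exact norm_integral_le_of_norm_le
    ((integrable_add_norm_sub_rpow_neg_mul_norm hp hmeas hint hσ x).const_mul C)
    (.of_forall (norm_kernel_smul_le hK h x))

end Kernel

lemma aestronglyMeasurable_prod_rpow_neg [SecondCountableTopology E] [SFinite μ]
    (hmeas : AEStronglyMeasurable h μ) (σ : ℝ) :
    AEStronglyMeasurable (fun z : E × E =>
      (σ + ‖z.1 - z.2‖) ^ (-p) * ‖h z.2‖ * (1 + ‖z.1‖) ^ (-p)) (μ.prod μ) := by
  have hσ : Measurable fun z : E × E => (σ + ‖z.1 - z.2‖) ^ (-p) := by fun_prop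
  have hweight : Measurable fun z : E × E => (1 + ‖z.1‖) ^ (-p) := by fun_prop
  exact (hσ.aestronglyMeasurable.mul hmeas.norm.comp_snd).mul hweight.aestronglyMeasurable

variable [NormedSpace ℝ E] [FiniteDimensional ℝ E] [μ.IsAddHaarMeasure]

lemma integrable_prod_one_add_norm_rpow_neg (hp : Module.finrank ℝ E < p)
    (hmeas : AEStronglyMeasurable h μ)
    (hint : Integrable (fun y => ‖h y‖ * (1 + ‖y‖) ^ (-p)) μ) :
    Integrable (fun z : E × E =>
      (1 + ‖z.1 - z.2‖) ^ (-p) * ‖h z.2‖ * (1 + ‖z.1‖) ^ (-p)) (μ.prod μ) := by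
  have hp0 : 0 ≤ p := (Nat.cast_nonneg _).trans hp.le
  have hweight : Integrable (fun x : E => (1 + ‖x‖) ^ (-p)) μ := integrable_one_add_norm hp
  have hconv := hint.convolution_integrand (ContinuousLinearMap.mul ℝ ℝ) hweight
  refine ((hconv.add (hweight.mul_prod hint)).const_mul (2 ^ p)).mono'
    (aestronglyMeasurable_prod_rpow_neg hmeas 1) (.of_forall fun ⟨x, y⟩ => ?_)
  have hy : ‖y‖ ≤ ‖x - y‖ + ‖x‖ := by simpa [add_comm] using norm_sub_le x (x - y)
  rw [norm_of_nonneg (by positivity)]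
  calc (1 + ‖x - y‖) ^ (-p) * ‖h y‖ * (1 + ‖x‖) ^ (-p)
      = (1 + ‖x - y‖) ^ (-p) * (1 + ‖x‖) ^ (-p) * ‖h y‖ := by ring
    _ ≤ 2 ^ p * (((1 + ‖x - y‖) ^ (-p) + (1 + ‖x‖) ^ (-p)) * (1 + ‖y‖) ^ (-p)) * ‖h y‖ := by
        gcongr ?_ * _
        exact rpow_neg_mul_rpow_neg_le hp0 (norm_nonneg _) (norm_nonneg _) (norm_nonneg _) hy
    _ = 2 ^ p * (‖h y‖ * (1 + ‖y‖) ^ (-p) * (1 + ‖x - y‖) ^ (-p) +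
          (1 + ‖x‖) ^ (-p) * (‖h y‖ * (1 + ‖y‖) ^ (-p))) := by ring

lemma integrable_prod_add_norm_rpow_neg (hp : Module.finrank ℝ E < p)
    (hmeas : AEStronglyMeasurable h μ)
    (hint : Integrable (fun y => ‖h y‖ * (1 + ‖y‖) ^ (-p)) μ) {σ : ℝ} (hσ : 1 ≤ σ) :
    Integrable (fun z : E × E =>
      (σ + ‖z.1 - z.2‖) ^ (-p) * ‖h z.2‖ * (1 + ‖z.1‖) ^ (-p)) (μ.prod μ) :=
  (integrable_prod_one_add_norm_rpow_neg hp hmeas hint).mono'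
    (aestronglyMeasurable_prod_rpow_neg hmeas σ)
    (.of_forall (norm_prod_rpow_neg_le ((Nat.cast_nonneg _).trans hp.le) hσ h))

lemma tendsto_integral_prod_rpow_neg_atTop (hp : Module.finrank ℝ E < p)
    (hmeas : AEStronglyMeasurable h μ)
    (hint : Integrable (fun y => ‖h y‖ * (1 + ‖y‖) ^ (-p)) μ) :
    Tendsto (fun σ : ℝ => ∫ z : E × E,
      (σ + ‖z.1 - z.2‖) ^ (-p) * ‖h z.2‖ * (1 + ‖z.1‖) ^ (-p) ∂μ.prod μ) atTop (nhds 0) := by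
  have hp0 : 0 < p := (Nat.cast_nonneg _).trans_lt hp
  rw [← integral_zero (E × E) ℝ (μ := μ.prod μ)]
  refine tendsto_integral_filter_of_dominated_convergence _
    (.of_forall (aestronglyMeasurable_prod_rpow_neg hmeas))
    ((eventually_ge_atTop 1).mono fun σ hσ => .of_forall (norm_prod_rpow_neg_le hp0.le hσ h))
    (integrable_prod_one_add_norm_rpow_neg hp hmeas hint) (.of_forall fun z => ?_)
  simpa only [zero_mul] using
    ((tendsto_add_const_rpow_neg_atTop hp0 ‖z.1 - z.2‖).mul_const ‖h z.2‖).mul_const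
      ((1 + ‖z.1‖) ^ (-p))

lemma integral_norm_integral_kernel_smul_le [NormedSpace ℝ F] (hp : Module.finrank ℝ E < p)
    (hmeas : AEStronglyMeasurable h μ)
    (hint : Integrable (fun y => ‖h y‖ * (1 + ‖y‖) ^ (-p)) μ)
    {K : E → ℝ} {C σ : ℝ} (hσ : 1 ≤ σ) (hK : ∀ x, |K x| ≤ C * (σ + ‖x‖) ^ (-p)) :
    ∫ x, ‖∫ y, K (x - y) • h y ∂μ‖ * (1 + ‖x‖) ^ (-p) ∂μ ≤
      C * ∫ z : E × E,
        (σ + ‖z.1 - z.2‖) ^ (-p) * ‖h z.2‖ * (1 + ‖z.1‖) ^ (-p) ∂μ.prod μ := by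
  have hprod := integrable_prod_add_norm_rpow_neg hp hmeas hint hσ
  rw [integral_prod _ hprod, ← integral_const_mul]
  refine integral_mono_of_nonneg (.of_forall fun x => by positivity)
    (hprod.integral_prod_left.const_mul C) (.of_forall fun x => ?_)
  simp only [integral_mul_const, ← mul_assoc]
  gcongr
  exact norm_integral_kernel_smul_le ((Nat.cast_nonneg _).trans hp.le) hmeas hint
    (zero_lt_one.trans_le hσ) hK x

lemma tendsto_integral_norm_integral_kernel_smul [NormedSpace ℝ F]
    (hp : Module.finrank ℝ E < p) (hmeas : AEStronglyMeasurable h μ)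
    (hint : Integrable (fun y => ‖h y‖ * (1 + ‖y‖) ^ (-p)) μ)
    {ι : Type*} {l : Filter ι} {K : ι → E → ℝ} {C : ℝ} {σ : ι → ℝ} (hσ : Tendsto σ l atTop)
    (hK : ∀ᶠ n in l, ∀ x, |K n x| ≤ C * (σ n + ‖x‖) ^ (-p)) :
    Tendsto (fun n => ∫ x, ‖∫ y, K n (x - y) • h y ∂μ‖ * (1 + ‖x‖) ^ (-p) ∂μ) l (nhds 0) := by
  have hlim := ((tendsto_integral_prod_rpow_neg_atTop hp hmeas hint).comp hσ).const_mul C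
  rw [mul_zero] at hlim
  refine squeeze_zero' (.of_forall fun n => integral_nonneg fun x => by positivity) ?_ hlim
  filter_upwards [hσ.eventually_ge_atTop 1, hK] with n hσn hKn
  exact integral_norm_integral_kernel_smul_le hp hmeas hint hσn hKn

end WeightedConvolution

section PartialDerivatives

lemma pd_mul (i : Fin d) {f g : EuclideanSpace ℝ (Fin d) → ℝ} {x : EuclideanSpace ℝ (Fin d)}
    (hf : DifferentiableAt ℝ f x) (hg : DifferentiableAt ℝ g x) :
    pd i (fun y => f y * g y) x = f x * pd i g x + g x * pd i f x := by
  simp [pd, fderiv_fun_mul hf hg]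

lemma pd_const_mul (i : Fin d) (c : ℝ) {f : EuclideanSpace ℝ (Fin d) → ℝ}
    {x : EuclideanSpace ℝ (Fin d)} (hf : DifferentiableAt ℝ f x) :
    pd i (fun y => c * f y) x = c * pd i f x := by
  simp [pd, fderiv_const_mul hf]

lemma pd_sub_const (i : Fin d) (f : EuclideanSpace ℝ (Fin d) → ℝ) (c : ℝ)
    (x : EuclideanSpace ℝ (Fin d)) : pd i (fun y => f y - c) x = pd i f x := by
  simp [pd, fderiv_sub_const]

lemma pd_coord (i j : Fin d) (x : EuclideanSpace ℝ (Fin d)) :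
    pd i (fun y => y j) x = if j = i then 1 else 0 := by
  simp [pd, (PiLp.hasFDerivAt_apply (𝕜 := ℝ) 2 x j).fderiv]

lemma hasFDerivAt_heatW (t : ℝ) (x : EuclideanSpace ℝ (Fin d)) :
    HasFDerivAt (heatW d t) (-((2 * t)⁻¹ * heatW d t x) • innerSL ℝ x) x := by
  have hnorm : HasFDerivAt (fun y : EuclideanSpace ℝ (Fin d) => ‖y‖ ^ 2) (2 • innerSL ℝ x) x :=
    (hasStrictFDerivAt_norm_sq x).hasFDerivAt
  have hgauss := ((hnorm.neg.mul_const (4 * t)⁻¹).exp).const_mul ((4 * π * t) ^ (-(d : ℝ) / 2))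
  refine hgauss.congr_fderiv ?_
  ext v
  simp only [heatW, div_eq_mul_inv, neg_apply, smul_apply, coe_innerSL_apply, nsmul_eq_mul,
    smul_eq_mul, Nat.cast_ofNat, mul_inv_rev, Pi.neg_apply, neg_smul, smul_neg]
  ring

lemma differentiableAt_heatW (t : ℝ) (x : EuclideanSpace ℝ (Fin d)) :
    DifferentiableAt ℝ (heatW d t) x :=
  (hasFDerivAt_heatW t x).differentiableAt

lemma pd_heatW (i : Fin d) (t : ℝ) (x : EuclideanSpace ℝ (Fin d)) :
    pd i (heatW d t) x = -(2 * t)⁻¹ * x i * heatW d t x := by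
  simp only [pd, (hasFDerivAt_heatW t x).fderiv, smul_apply, coe_innerSL_apply,
    EuclideanSpace.inner_single_right, ringHom_apply, one_mul, smul_eq_mul]
  ring

lemma pd_mul_heatW (i : Fin d) (t : ℝ) {f : EuclideanSpace ℝ (Fin d) → ℝ}
    {x : EuclideanSpace ℝ (Fin d)} (hf : DifferentiableAt ℝ f x) :
    pd i (fun y => f y * heatW d t y) x =
      (pd i f x - (2 * t)⁻¹ * x i * f x) * heatW d t x := by
  rw [pd_mul i hf (differentiableAt_heatW t x), pd_heatW]
  ring

lemma pd_pd_heatW (i j : Fin d) (t : ℝ) (x : EuclideanSpace ℝ (Fin d)) :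
    pd i (pd j (heatW d t)) x =
      ((2 * t)⁻¹ ^ 2 * (x i * x j) - (2 * t)⁻¹ * if j = i then 1 else 0) * heatW d t x := by
  have hj := (PiLp.hasFDerivAt_apply (𝕜 := ℝ) 2 x j).differentiableAt
  rw [funext (pd_heatW j t), pd_mul_heatW i t (hj.const_mul _), pd_const_mul i _ hj, pd_coord]
  ring

lemma pd_pd_pd_heatW (i j k : Fin d) (t : ℝ) (x : EuclideanSpace ℝ (Fin d)) :
    pd k (pd i (pd j (heatW d t))) x =
      ((2 * t)⁻¹ ^ 2 * ((if j = k then 1 else 0) * x i + (if i = k then 1 else 0) * x j +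
        (if j = i then 1 else 0) * x k) - (2 * t)⁻¹ ^ 3 * (x i * x j * x k)) * heatW d t x := by
  have hi := (PiLp.hasFDerivAt_apply (𝕜 := ℝ) 2 x i).differentiableAt
  have hj := (PiLp.hasFDerivAt_apply (𝕜 := ℝ) 2 x j).differentiableAt
  have hij := hi.fun_mul hj
  rw [funext (pd_pd_heatW i j t), pd_mul_heatW k t ((hij.const_mul _).sub_const _),
    pd_sub_const, pd_const_mul k _ hij, pd_mul k hi hj, pd_coord, pd_coord]
  ring

end PartialDerivatives

section HeatKernelBounds

lemma one_add_pow_mul_exp_neg_sq_le (n : ℕ) {s : ℝ} (hs : 0 ≤ 1 + s) :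
    (1 + s) ^ n * exp (-s ^ 2 / 4) ≤ n.factorial * exp 2 := by
  have hpow : (1 + s) ^ n ≤ exp (1 + s) * n.factorial :=
    (div_le_iff₀ (by positivity)).1 (pow_div_factorial_le_exp (1 + s) hs n)
  have hexp : exp (-s ^ 2 / 4) ≤ exp (2 - (1 + s)) :=
    exp_le_exp.2 (by nlinarith [sq_nonneg (s - 2)])
  calc (1 + s) ^ n * exp (-s ^ 2 / 4)
      ≤ exp (1 + s) * n.factorial * exp (2 - (1 + s)) := by gcongr
    _ = n.factorial * exp (1 + s + (2 - (1 + s))) := by rw [exp_add (1 + s)]; ring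
    _ = n.factorial * exp 2 := by rw [add_sub_cancel]

lemma heatW_eq_div_sqrt_pow {t : ℝ} (ht : 0 < t) (x : EuclideanSpace ℝ (Fin d)) :
    heatW d t x = (4 * π) ^ (-(d : ℝ) / 2) / √t ^ d * exp (-(‖x‖ / √t) ^ 2 / 4) := by
  have hprefactor : t ^ (-(d : ℝ) / 2) = (√t ^ d)⁻¹ := by
    rw [sqrt_eq_rpow, ← rpow_natCast, ← rpow_mul ht.le, ← rpow_neg ht.le]
    congr 1
    ring
  rw [heatW, mul_rpow (by positivity) ht.le, hprefactor, div_pow, sq_sqrt ht.le, div_eq_mul_inv]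
  congr 2
  field_simp

lemma heatW_mul_pow_le (m : ℕ) {t : ℝ} (ht : 0 < t) (x : EuclideanSpace ℝ (Fin d)) :
    heatW d t x * (√t + ‖x‖) ^ m ≤
      (4 * π) ^ (-(d : ℝ) / 2) * (m.factorial * exp 2) * (√t ^ m / √t ^ d) := by
  have hscale : √t + ‖x‖ = √t * (1 + ‖x‖ / √t) := by field_simp
  rw [heatW_eq_div_sqrt_pow ht, hscale, mul_pow]
  calc (4 * π) ^ (-(d : ℝ) / 2) / √t ^ d * exp (-(‖x‖ / √t) ^ 2 / 4) *
        (√t ^ m * (1 + ‖x‖ / √t) ^ m)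
      = (4 * π) ^ (-(d : ℝ) / 2) *
          ((1 + ‖x‖ / √t) ^ m * exp (-(‖x‖ / √t) ^ 2 / 4)) * (√t ^ m / √t ^ d) := by ring
    _ ≤ _ := by
        gcongr _ * ?_ * _
        exact one_add_pow_mul_exp_neg_sq_le m (by positivity)

lemma abs_cubic_le (i j k : Fin d) {t : ℝ} (ht : 0 < t) (x : EuclideanSpace ℝ (Fin d)) :
    |(2 * t)⁻¹ ^ 2 * ((if j = k then 1 else 0) * x i + (if i = k then 1 else 0) * x j +
        (if j = i then 1 else 0) * x k) - (2 * t)⁻¹ ^ 3 * (x i * x j * x k)| ≤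
      (√t + ‖x‖) ^ 3 / √t ^ 6 := by
  have hcoord (l : Fin d) : |x l| ≤ ‖x‖ := PiLp.norm_apply_le x l
  have hdelta (P : Prop) [Decidable P] (l : Fin d) : |(if P then 1 else 0) * x l| ≤ ‖x‖ := by
    split_ifs
    · simpa only [one_mul] using hcoord l
    · simp only [zero_mul, abs_zero, norm_nonneg]
  have hlinear : |(if j = k then 1 else 0) * x i + (if i = k then 1 else 0) * x j +
      (if j = i then 1 else 0) * x k| ≤ 3 * ‖x‖ := by
    refine (abs_add_three _ _ _).trans ?_
    linarith [hdelta (j = k) i, hdelta (i = k) j, hdelta (j = i) k]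
  have hcubic : |x i * x j * x k| ≤ ‖x‖ ^ 3 := by
    rw [abs_mul, abs_mul, pow_three']
    gcongr <;> exact hcoord _
  have hpoly : 3 * ‖x‖ * √t ^ 2 / 4 + ‖x‖ ^ 3 / 8 ≤ (√t + ‖x‖) ^ 3 := by
    have hexpand : (√t + ‖x‖) ^ 3 - (3 * ‖x‖ * √t ^ 2 / 4 + ‖x‖ ^ 3 / 8) =
        √t ^ 3 + 9 / 4 * ‖x‖ * √t ^ 2 + 3 * √t * ‖x‖ ^ 2 + 7 / 8 * ‖x‖ ^ 3 := by ring
    exact sub_nonneg.1 (hexpand ▸ by positivity)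
  refine (abs_sub _ _).trans ?_
  rw [abs_mul, abs_mul, abs_of_pos (by positivity : 0 < (2 * t)⁻¹ ^ 2),
    abs_of_pos (by positivity : 0 < (2 * t)⁻¹ ^ 3)]
  calc _ ≤ (2 * t)⁻¹ ^ 2 * (3 * ‖x‖) + (2 * t)⁻¹ ^ 3 * ‖x‖ ^ 3 := by gcongr
    _ = (3 * ‖x‖ * √t ^ 2 / 4 + ‖x‖ ^ 3 / 8) / √t ^ 6 := by
        rw [show √t ^ 6 = (√t ^ 2) ^ 3 by ring, sq_sqrt ht.le]
        field_simp
        ring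
    _ ≤ (√t + ‖x‖) ^ 3 / √t ^ 6 := by gcongr

lemma exists_abs_pd_pd_pd_heatW_le (d : ℕ) : ∃ A : ℝ, 0 < A ∧
    ∀ (i j k : Fin d) (t : ℝ), 0 < t → ∀ x : EuclideanSpace ℝ (Fin d),
      |pd k (pd i (pd j (heatW d t))) x| ≤
        A * ((√t)⁻¹ * (√t + ‖x‖) ^ (-((d : ℝ) + 1 + 1))) := by
  refine ⟨(4 * π) ^ (-(d : ℝ) / 2) * ((d + 5).factorial * exp 2), by positivity,
    fun i j k t ht x => ?_⟩
  have hW : 0 ≤ heatW d t x := by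
    unfold heatW
    positivity
  have hrpow : (√t + ‖x‖) ^ (-((d : ℝ) + 1 + 1)) = ((√t + ‖x‖) ^ (d + 2))⁻¹ := by
    rw [rpow_neg (by positivity), ← rpow_natCast]
    push_cast
    ring_nf
  rw [pd_pd_pd_heatW, abs_mul, abs_of_nonneg hW, hrpow]
  calc _ ≤ (√t + ‖x‖) ^ 3 / √t ^ 6 * heatW d t x := by
        gcongr
        exact abs_cubic_le i j k ht x
    _ = heatW d t x * (√t + ‖x‖) ^ (d + 5) / (√t ^ 6 * (√t + ‖x‖) ^ (d + 2)) := by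
        field_simp
        ring
    _ ≤ (4 * π) ^ (-(d : ℝ) / 2) * ((d + 5).factorial * exp 2) * (√t ^ (d + 5) / √t ^ d) /
          (√t ^ 6 * (√t + ‖x‖) ^ (d + 2)) := by
        gcongr ?_ / _
        exact heatW_mul_pow_le (d + 5) ht x
    _ = _ := by
        field_simp
        ring

lemma hasDerivAt_sqrt_add_rpow_neg {q r t : ℝ} (hq : q ≠ 0) (hr : 0 ≤ r) (ht : 0 < t) :
    HasDerivAt (fun t => -(2 / q) * (√t + r) ^ (-q)) ((√t)⁻¹ * (√t + r) ^ (-(q + 1))) t := by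
  refine ((((hasDerivAt_sqrt ht.ne').add_const r).rpow_const (p := -q)
    (.inl (by positivity))).const_mul (-(2 / q))).congr_deriv ?_
  rw [neg_add']
  field_simp

section Integral

variable {q r τ : ℝ}

lemma tendsto_neg_mul_sqrt_add_rpow_neg (hq : 0 < q) :
    Tendsto (fun t => -(2 / q) * (√t + r) ^ (-q)) atTop (nhds 0) := by
  simpa only [mul_zero, Function.comp_apply] using
    ((tendsto_add_const_rpow_neg_atTop hq r).comp tendsto_sqrt_atTop).const_mul (-(2 / q))

lemma integrableOn_Ioi_inv_sqrt_mul_rpow_neg (hq : 0 < q) (hr : 0 ≤ r) (hτ : 0 < τ) :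
    IntegrableOn (fun t => (√t)⁻¹ * (√t + r) ^ (-(q + 1))) (Set.Ioi τ) :=
  integrableOn_Ioi_deriv_of_nonneg'
    (fun _ ht => hasDerivAt_sqrt_add_rpow_neg hq.ne' hr (hτ.trans_le ht))
    (fun _ _ => by positivity) (tendsto_neg_mul_sqrt_add_rpow_neg hq)

lemma integral_Ioi_inv_sqrt_mul_rpow_neg (hq : 0 < q) (hr : 0 ≤ r) (hτ : 0 < τ) :
    ∫ t in Set.Ioi τ, (√t)⁻¹ * (√t + r) ^ (-(q + 1)) = 2 / q * (√τ + r) ^ (-q) := by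
  rw [integral_Ioi_of_hasDerivAt_of_nonneg'
    (fun _ ht => hasDerivAt_sqrt_add_rpow_neg hq.ne' hr (hτ.trans_le ht))
    (fun _ _ => by positivity) (tendsto_neg_mul_sqrt_add_rpow_neg hq)]
  ring

end Integral

lemma exists_abs_heatKer_le (d : ℕ) : ∃ C : ℝ, 0 < C ∧
    ∀ (i j k : Fin d) (τ : ℝ), 0 < τ → ∀ x : EuclideanSpace ℝ (Fin d),
      |heatKer d i j k τ x| ≤ C * (√τ + ‖x‖) ^ (-((d : ℝ) + 1)) := by
  obtain ⟨A, hA, hbound⟩ := exists_abs_pd_pd_pd_heatW_le d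
  have hd : (0 : ℝ) < d + 1 := by positivity
  refine ⟨A * (2 / (d + 1)), by positivity, fun i j k τ hτ x => ?_⟩
  calc |heatKer d i j k τ x|
      ≤ ∫ t in Set.Ioi τ, A * ((√t)⁻¹ * (√t + ‖x‖) ^ (-((d : ℝ) + 1 + 1))) := by
        rw [← norm_eq_abs, heatKer]
        exact norm_integral_le_of_norm_le
          ((integrableOn_Ioi_inv_sqrt_mul_rpow_neg hd (norm_nonneg x) hτ).const_mul A)
          ((ae_restrict_mem measurableSet_Ioi).mono fun t ht => hbound i j k t (hτ.trans ht) x)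
    _ = A * (2 / (d + 1)) * (√τ + ‖x‖) ^ (-((d : ℝ) + 1)) := by
        rw [integral_const_mul, integral_Ioi_inv_sqrt_mul_rpow_neg hd (norm_nonneg x) hτ,
          mul_assoc]

lemma measurable_heatKer (i j k : Fin d) (τ : ℝ) : Measurable (heatKer d i j k τ) := by
  have hjoint : Measurable fun z : EuclideanSpace ℝ (Fin d) × ℝ =>
      pd k (pd i (pd j (heatW d z.2))) z.1 := by
    simp only [pd_pd_pd_heatW, heatW]
    fun_prop
  exact hjoint.stronglyMeasurable.integral_prod_right.measurable

end HeatKernelBounds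

theorem stmt_13_general (d : ℕ) (i j k : Fin d) (h : EuclideanSpace ℝ (Fin d) → ℝ)
    (hmeas : AEStronglyMeasurable h)
    (hint : Integrable (fun y : EuclideanSpace ℝ (Fin d) =>
      |h y| * (1 + ‖y‖) ^ (-((d : ℝ) + 1)))) :
    (∀ τ : ℝ, 0 < τ → ∀ x : EuclideanSpace ℝ (Fin d),
      Integrable fun y : EuclideanSpace ℝ (Fin d) => heatKer d i j k τ (x - y) * h y) ∧
    (∃ C : ℝ, 0 < C ∧ ∀ τ : ℝ, 0 < τ → ∀ x : EuclideanSpace ℝ (Fin d),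
      |∫ y : EuclideanSpace ℝ (Fin d), heatKer d i j k τ (x - y) * h y|
        ≤ C * ∫ y : EuclideanSpace ℝ (Fin d),
            (√τ + ‖x - y‖) ^ (-((d : ℝ) + 1)) * |h y|) ∧
    Tendsto (fun τ : ℝ =>
        ∫ x : EuclideanSpace ℝ (Fin d),
          |∫ y : EuclideanSpace ℝ (Fin d), heatKer d i j k τ (x - y) * h y|
            * (1 + ‖x‖) ^ (-((d : ℝ) + 1)))
      atTop (nhds 0) := by
  obtain ⟨C, hC, hker⟩ := exists_abs_heatKer_le d
  have hp : (0 : ℝ) ≤ d + 1 := by positivity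
  have hp_dim : Module.finrank ℝ (EuclideanSpace ℝ (Fin d)) < (d : ℝ) + 1 := by simp
  refine ⟨fun τ hτ => ?_, ⟨C, hC, fun τ hτ => ?_⟩, ?_⟩
  · exact integrable_kernel_smul hp hmeas hint (sqrt_pos.2 hτ) (measurable_heatKer i j k τ)
      (hker i j k τ hτ)
  · exact norm_integral_kernel_smul_le hp hmeas hint (sqrt_pos.2 hτ) (hker i j k τ hτ)
  · exact tendsto_integral_norm_integral_kernel_smul hp_dim hmeas hint tendsto_sqrt_atTop
      ((eventually_gt_atTop 0).mono fun τ hτ => hker i j k τ hτ)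

theorem stmt_13 (d : ℕ) (hd : d = 2 ∨ d = 3) (i j k : Fin d)
    (h : EuclideanSpace ℝ (Fin d) → ℝ) (hmeas : Measurable h)
    (hint : Integrable (fun y : EuclideanSpace ℝ (Fin d) =>
      |h y| * (1 + ‖y‖) ^ (-((d : ℝ) + 1)))) :
    (∃ C : ℝ, 0 < C ∧ ∀ τ : ℝ, 0 < τ → ∀ x : EuclideanSpace ℝ (Fin d),
      |∫ y : EuclideanSpace ℝ (Fin d), heatKer d i j k τ (x - y) * h y|
        ≤ C * ∫ y : EuclideanSpace ℝ (Fin d),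
            (Real.sqrt τ + ‖x - y‖) ^ (-((d : ℝ) + 1)) * |h y|) ∧
    Tendsto (fun τ : ℝ =>
        ∫ x : EuclideanSpace ℝ (Fin d),
          |∫ y : EuclideanSpace ℝ (Fin d), heatKer d i j k τ (x - y) * h y|
            * (1 + ‖x‖) ^ (-((d : ℝ) + 1)))
      atTop (nhds 0) :=
  (stmt_13_general d i j k h hmeas.aestronglyMeasurable hint).2
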